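/- Let n be a natural number, E a real normed vector space, and let 𝒟 ⊆ Fin n be a subset of token indices (the data tokens), with complement 𝒩 (the non-data tokens). Let α, α' : Fin n → ℝ be two sets of attention weights with α j ≥ 0 and α' j ≥ 0 for all j, and let V, V' : Fin n → E be two sets of value vectors with ‖V j‖ ≤ M and ‖V' j‖ ≤ M for all j, for some M ≥ 0. Assume the non-data tokens are unaffected: α' j = α j and V' j = V j for every j ∈ 𝒩. Let ε ≥ 0 and assume the attention mass on data tokens is small in both cases: ∑_{j ∈ 𝒟} α j ≤ ε and ∑_{j ∈ 𝒟} α' j ≤ ε. Then the attention outputs satisfy ‖(∑_{j} α' j • V' j) − (∑_{j} α j • V j)‖ ≤ 2 * ε * M. -/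

import Mathlib

/-- Hallucination model (1) of the Negation Invariance theorem (quantitative form):
if a transformation leaves attention weights and values unchanged on the non-data
tokens `𝒟ᶜ`, all weights are nonnegative, all value vectors have norm at most `M`,
and the attention mass on the data tokens `𝒟` is at most `ε` in both cases, then
the attention outputs differ in norm by at most `2 * ε * M`. -/
theorem attention_missing_mass
    {n : ℕ} {E : Type*} [NormedAddCommGroup E] [NormedSpace ℝ E]
    (𝒟 : Finset (Fin n))
    (α α' : Fin n → ℝ) (V V' : Fin n → E) (M ε : ℝ)
    (hα : ∀ j, 0 ≤ α j) (hα' : ∀ j, 0 ≤ α' j)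
    (hV : ∀ j, ‖V j‖ ≤ M) (hV' : ∀ j, ‖V' j‖ ≤ M)
    (hM : 0 ≤ M) (hε : 0 ≤ ε)
    (hN : ∀ j ∈ 𝒟ᶜ, α' j = α j ∧ V' j = V j)
    (hmass : ∑ j ∈ 𝒟, α j ≤ ε) (hmass' : ∑ j ∈ 𝒟, α' j ≤ ε) :
    ‖(∑ j, α' j • V' j) - ∑ j, α j • V j‖ ≤ 2 * ε * M := by 
  have key : ∀ (a : Fin n → ℝ) (W : Fin n → E), (∀ j, 0 ≤ a j) → (∀ j, ‖W j‖ ≤ M) →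
      ∑ j ∈ 𝒟, a j ≤ ε → ‖∑ j ∈ 𝒟, a j • W j‖ ≤ ε * M := by
    intro a W ha hW hm
    calc ‖∑ j ∈ 𝒟, a j • W j‖ ≤ ∑ j ∈ 𝒟, a j * M := by
          refine norm_sum_le_of_le _ fun j _ => ?_
          rw [norm_smul, Real.norm_of_nonneg (ha j)]
          exact mul_le_mul_of_nonneg_left (hW j) (ha j)
      _ = (∑ j ∈ 𝒟, a j) * M := (Finset.sum_mul _ _ _).symm
      _ ≤ ε * M := mul_le_mul_of_nonneg_right hm hM
  have hc : ∑ j ∈ 𝒟ᶜ, α' j • V' j = ∑ j ∈ 𝒟ᶜ, α j • V j :=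
    Finset.sum_congr rfl fun j hj => by rw [(hN j hj).1, (hN j hj).2]
  rw [← Finset.sum_add_sum_compl 𝒟 (fun j => α' j • V' j),
    ← Finset.sum_add_sum_compl 𝒟 (fun j => α j • V j), hc, add_sub_add_right_eq_sub]
  have h1 := key α V hα hV hmass
  have h2 := key α' V' hα' hV' hmass'
  have h3 := norm_sub_le (∑ j ∈ 𝒟, α' j • V' j) (∑ j ∈ 𝒟, α j • V j)
  linarith
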